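/- Almost all multipartite pure states are nearly maximally entangled with respect to the geometric measure: let N ≥ 3, let d_1, …, d_N ≥ 2, set H = ⊗_{j=1}^N ℂ^{d_j}, d_T = ∏_{j=1}^N d_j and d_S = Σ_{j=1}^N d_j, and let μ be the unitarily invariant (uniform) Borel probability measure on the unit sphere of H. Then μ{ ψ : Λ²(|ψ⟩⟨ψ|) ≥ (9 d_S ln d_T)/(2 d_T) } < d_T^{−d_S}; equivalently, the fraction of unit vectors ψ whose geometric measure G(|ψ⟩⟨ψ|) is at most log₂ d_T − log₂(d_S ln d_T) − log₂(9/2) is less than d_T^{−d_S} (here ln denotes the natural logarithm). -/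

import Mathlib

open scoped BigOperators InnerProductSpace

namespace Paper

/-- The Borel σ-algebra on a complex Euclidean space. -/
noncomputable instance euclideanComplexMeasurableSpace {ι : Type*} [Fintype ι] :
    MeasurableSpace (EuclideanSpace ℂ ι) := borel _

/-- The map induced on the unit sphere by a ℂ-linear isometry (a unitary). -/
noncomputable def sphereMap {E : Type*} [NormedAddCommGroup E] [NormedSpace ℂ E]
    (U : E ≃ₗᵢ[ℂ] E) : Metric.sphere (0 : E) 1 → Metric.sphere (0 : E) 1 :=
  fun ψ => ⟨U ψ, by
    have h : ‖(ψ : E)‖ = 1 := mem_sphere_zero_iff_norm.mp ψ.2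
    simp [mem_sphere_zero_iff_norm, U.norm_map, h]⟩

/-- `a` is an ℓ²-normalized (unit) vector. -/
def IsUnitVec {n : Type*} [Fintype n] (a : n → ℂ) : Prop :=
  ∑ x, ‖a x‖ ^ 2 = 1

/-- The product vector a_1 ⊗ ⋯ ⊗ a_N. -/
def prodVec {N : ℕ} {ι : Fin N → Type*} (a : ∀ j, ι j → ℂ) : (∀ j, ι j) → ℂ :=
  fun i => ∏ j, a j (i j)

/-- Λ²(|ψ⟩⟨ψ|) for a pure state ψ: the maximal squared overlap |⟨φ,ψ⟩|² with unit
product vectors φ. -/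
noncomputable def pureMaxOverlap {N : ℕ} {d : Fin N → ℕ} (ψ : (∀ j, Fin (d j)) → ℂ) : ℝ :=
  sSup {r : ℝ | ∃ a : ∀ j, Fin (d j) → ℂ, (∀ j, IsUnitVec (a j)) ∧
    r = ‖∑ i, starRingEnd ℂ (prodVec a i) * ψ i‖ ^ 2}

section Aux
open scoped ComplexConjugate

/-- Number of occurrences of each letter in a word. -/
def cnt {ι : Type*} [DecidableEq ι] {k : ℕ} (s : Fin k → ι) : ι → Fin (k + 1) :=
  fun i => ⟨(Finset.univ.filter (fun l => s l = i)).card, by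
    have h := Finset.card_le_univ (Finset.univ.filter (fun l => s l = i))
    simp only [Fintype.card_fin] at h
    omega⟩

lemma cnt_val {ι : Type*} [DecidableEq ι] {k : ℕ} (s : Fin k → ι) (i : ι) :
    ((cnt s i : Fin (k + 1)) : ℕ) = (Finset.univ.filter (fun l => s l = i)).card := rfl

lemma prod_eq_cnt {ι : Type*} [Fintype ι] [DecidableEq ι] {R : Type*} [CommMonoid R] {k : ℕ}
    (f : ι → R) (s : Fin k → ι) : ∏ l, f (s l) = ∏ i, f i ^ (cnt s i : ℕ) := by
  simp only [cnt_val]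
  rw [← Finset.prod_fiberwise Finset.univ s]
  refine Finset.prod_congr rfl fun i _ => ?_
  rw [← Finset.prod_const]
  refine Finset.prod_congr rfl fun l hl => ?_
  rw [(Finset.mem_filter.mp hl).2]

lemma exists_perm_of_cnt_eq {ι : Type*} [DecidableEq ι] {k : ℕ} {s t : Fin k → ι}
    (h : cnt t = cnt s) : ∃ σ : Equiv.Perm (Fin k), t = s ∘ σ := by
  have e : ∀ i, Nonempty ({l // t l = i} ≃ {l // s l = i}) := by
    intro i
    refine ⟨Fintype.equivOfCardEq ?_⟩
    rw [Fintype.card_subtype, Fintype.card_subtype, ← cnt_val, ← cnt_val, h]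
  refine ⟨Equiv.ofFiberEquiv (fun i => (e i).some), ?_⟩
  funext l
  exact (Equiv.ofFiberEquiv_map (fun i => (e i).some) l).symm

/-- Size of the class of a word. -/
def ncl {ι : Type*} [Fintype ι] [DecidableEq ι] {k : ℕ} (s : Fin k → ι) : ℕ :=
  (Finset.univ.filter (fun t : Fin k → ι => cnt t = cnt s)).card

lemma ncl_pos {ι : Type*} [Fintype ι] [DecidableEq ι] {k : ℕ} (s : Fin k → ι) : 0 < ncl s :=
  Finset.card_pos.mpr ⟨s, by simp⟩

lemma ncl_le {ι : Type*} [Fintype ι] [DecidableEq ι] {k : ℕ} (s : Fin k → ι) :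
    ncl s ≤ k.factorial := by
  have : Finset.univ.filter (fun t : Fin k → ι => cnt t = cnt s) ⊆
      Finset.univ.image (fun σ : Equiv.Perm (Fin k) => s ∘ σ) := by
    intro t ht
    obtain ⟨σ, hσ⟩ := exists_perm_of_cnt_eq (Finset.mem_filter.mp ht).2
    exact Finset.mem_image.mpr ⟨σ, Finset.mem_univ _, hσ.symm⟩
  calc ncl s ≤ _ := Finset.card_le_card this
    _ ≤ _ := Finset.card_image_le
    _ = k.factorial := by rw [Finset.card_univ, Fintype.card_perm, Fintype.card_fin]

lemma ncl_congr {ι : Type*} [Fintype ι] [DecidableEq ι] {k : ℕ} {s t : Fin k → ι}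
    (h : cnt s = cnt t) : ncl s = ncl t := by
  unfold ncl; rw [h]

lemma two_pow_mul_factorial_le (k : ℕ) : 2 ^ k * k.factorial ≤ (k + 1) ^ k := by
  induction k with
  | zero => simp
  | succ k ih =>
    have h : 2 * (k + 1) ^ (k + 1) ≤ (k + 1 + 1) ^ (k + 1) := by
      have hb : (1 : ℝ) + ((k + 1 : ℕ) : ℝ) * (1 / ((k : ℝ) + 1)) ≤ (1 + 1 / ((k : ℝ) + 1)) ^ (k + 1) := by
        apply one_add_mul_le_pow
        have : (0 : ℝ) ≤ 1 / ((k : ℝ) + 1) := by positivity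
        linarith
      have hk : (0 : ℝ) < (k : ℝ) + 1 := by positivity
      have e1 : (1 : ℝ) + ((k + 1 : ℕ) : ℝ) * (1 / ((k : ℝ) + 1)) = 2 := by
        push_cast; field_simp; norm_num
      have e2 : (1 + 1 / ((k : ℝ) + 1)) = ((k : ℝ) + 1 + 1) / ((k : ℝ) + 1) := by
        field_simp
      rw [e1, e2, div_pow, le_div_iff₀ (by positivity)] at hb
      exact_mod_cast hb
    calc 2 ^ (k + 1) * (k + 1).factorial = 2 * (k + 1) * (2 ^ k * k.factorial) := by
          rw [Nat.factorial_succ]; ring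
      _ ≤ 2 * (k + 1) * (k + 1) ^ k := Nat.mul_le_mul_left _ ih
      _ = 2 * (k + 1) ^ (k + 1) := by ring
      _ ≤ _ := h

/-- A sum with coefficients constant on the fibres of `A` can be averaged over the fibres. -/
lemma sum_average {S T : Type*} [Fintype S] [DecidableEq T] (A : S → T) (β m : S → ℂ)
    (hβ : ∀ s t, A s = A t → β s = β t) :
    ∑ s, β s * m s = ∑ s, β s *
      ((∑ t ∈ Finset.univ.filter (fun t => A t = A s), m t) /
        ((Finset.univ.filter (fun t => A t = A s)).card : ℂ)) := by
  have h1 : ∀ s, β s * ((∑ t ∈ Finset.univ.filter (fun t => A t = A s), m t) /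
        ((Finset.univ.filter (fun t => A t = A s)).card : ℂ)) =
      ∑ t, if A t = A s then β t * m t / ((Finset.univ.filter (fun u => A u = A t)).card : ℂ) else 0 := by
    intro s
    rw [← Finset.sum_filter, mul_div_assoc', Finset.mul_sum, Finset.sum_div]
    refine Finset.sum_congr rfl fun t ht => ?_
    have ht := (Finset.mem_filter.mp ht).2
    rw [ht, hβ t s ht]
  simp_rw [h1]
  rw [Finset.sum_comm]
  refine Finset.sum_congr rfl fun t _ => ?_
  rw [← Finset.sum_filter, Finset.sum_const, nsmul_eq_mul]
  have : (Finset.univ.filter (fun s => A t = A s)) = Finset.univ.filter (fun u => A u = A t) := by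
    ext u; simp [eq_comm]
  rw [this]
  have hne : ((Finset.univ.filter (fun u => A u = A t)).card : ℂ) ≠ 0 := by
    exact_mod_cast (Finset.card_pos.mpr ⟨t, by simp⟩).ne'
  field_simp

lemma sum_inv_card_le {S T : Type*} [Fintype S] [Fintype T] [DecidableEq T] (A : S → T) :
    ∑ s, (((Finset.univ.filter (fun t => A t = A s)).card : ℝ))⁻¹ ≤ Fintype.card T := by
  rw [← Finset.sum_fiberwise Finset.univ A]
  calc _ ≤ ∑ _j : T, (1 : ℝ) := by
        refine Finset.sum_le_sum fun j _ => ?_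
        have : ∀ s ∈ Finset.univ.filter (fun s => A s = j),
            (((Finset.univ.filter (fun t => A t = A s)).card : ℝ))⁻¹ =
            (((Finset.univ.filter (fun t => A t = j)).card : ℝ))⁻¹ := by
          intro s hs; rw [(Finset.mem_filter.mp hs).2]
        rw [Finset.sum_congr rfl this, Finset.sum_const, nsmul_eq_mul]
        exact mul_inv_le_one
    _ = _ := by simp

/-- Diagonal unitary. -/
noncomputable def diagU {ι : Type*} [Fintype ι] (z : ι → ℂ) (hz : ∀ i, ‖z i‖ = 1) :
    EuclideanSpace ℂ ι ≃ₗᵢ[ℂ] EuclideanSpace ℂ ι where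
  toFun v := WithLp.toLp 2 (fun i => z i * v i)
  invFun v := WithLp.toLp 2 (fun i => (z i)⁻¹ * v i)
  map_add' v w := by ext i; simp [mul_add]
  map_smul' c v := by ext i; simp [mul_left_comm]
  left_inv v := by
    ext i
    have : z i ≠ 0 := fun h => by simpa [h] using hz i
    simp [this]
  right_inv v := by
    ext i
    have : z i ≠ 0 := fun h => by simpa [h] using hz i
    simp [this]
  norm_map' v := by simp [EuclideanSpace.norm_eq, hz]

lemma diagU_apply {ι : Type*} [Fintype ι] (z : ι → ℂ) (hz : ∀ i, ‖z i‖ = 1)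
    (v : EuclideanSpace ℂ ι) (i : ι) : diagU z hz v i = z i * v i := rfl

/-- Invariance of the law of a random vector under unitaries (tested on continuous functions). -/
def UInv {X : Type*} [MeasurableSpace X] (μ : MeasureTheory.Measure X) {ι : Type*} [Fintype ι]
    (f : X → EuclideanSpace ℂ ι) : Prop :=
  ∀ (U : EuclideanSpace ℂ ι ≃ₗᵢ[ℂ] EuclideanSpace ℂ ι) (g : EuclideanSpace ℂ ι → ℂ),
    Continuous g → ∫ x, g (U (f x)) ∂μ = ∫ x, g (f x) ∂μ

/-- The monomial of a word. -/
noncomputable def mono {ι : Type*} [Fintype ι] {k : ℕ} (s : Fin k → ι) (v : EuclideanSpace ℂ ι) : ℂ :=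
  ∏ l, v (s l)

lemma mono_congr {ι : Type*} [Fintype ι] [DecidableEq ι] {k : ℕ} {s t : Fin k → ι}
    (h : cnt s = cnt t) (v : EuclideanSpace ℂ ι) : mono s v = mono t v := by
  unfold mono
  rw [prod_eq_cnt (fun i => v i) s, prod_eq_cnt (fun i => v i) t, h]

lemma continuous_mono {ι : Type*} [Fintype ι] {k : ℕ} (s : Fin k → ι) :
    Continuous (fun v : EuclideanSpace ℂ ι => mono s v) := by
  unfold mono
  fun_prop

lemma integrable_cont {X : Type*} [TopologicalSpace X] [CompactSpace X] [MeasurableSpace X]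
    [OpensMeasurableSpace X] (μ : MeasureTheory.Measure X) [MeasureTheory.IsProbabilityMeasure μ]
    {F : Type*} [NormedAddCommGroup F] [SecondCountableTopologyEither X F]
    {g : X → F} (hg : Continuous g) : MeasureTheory.Integrable g μ := by
  exact hg.integrable_of_hasCompactSupport (HasCompactSupport.of_compactSpace g)

section main
variable {X : Type*} [TopologicalSpace X] [CompactSpace X] [MeasurableSpace X]
    [OpensMeasurableSpace X] (μ : MeasureTheory.Measure X) [MeasureTheory.IsProbabilityMeasure μ]
    {ι : Type*} [Fintype ι] [DecidableEq ι] {f : X → EuclideanSpace ℂ ι}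

lemma orth (hU : UInv μ f) {k : ℕ} {s t : Fin k → ι} (h : cnt s ≠ cnt t) :
    ∫ x, mono s (f x) * conj (mono t (f x)) ∂μ = 0 := by
  obtain ⟨i, hi⟩ := Function.ne_iff.mp h
  set w : ℂ := Complex.exp (2 * Real.pi * Complex.I / ((k + 1 : ℕ) : ℂ)) with hw
  have hp : IsPrimitiveRoot w (k + 1) := Complex.isPrimitiveRoot_exp (k + 1) (by omega)
  have hn : ‖w‖ = 1 := Complex.norm_eq_one_of_pow_eq_one hp.pow_eq_one (by omega)
  let z : ι → ℂ := fun j => if j = i then w else 1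
  have hz : ∀ j, ‖z j‖ = 1 := by intro j; by_cases hj : j = i <;> simp [z, hj, hn]
  have hzp : ∀ u : Fin k → ι, ∏ l, z (u l) = w ^ (cnt u i : ℕ) := by
    intro u
    rw [prod_eq_cnt z u]
    simp only [z, ite_pow, one_pow]
    rw [Finset.prod_ite_eq' Finset.univ i]
    simp
  have hm : ∀ (u : Fin k → ι) v, mono u (diagU z hz v) = w ^ (cnt u i : ℕ) * mono u v := by
    intro u v
    simp only [mono, diagU_apply]
    rw [Finset.prod_mul_distrib, hzp]
  have key := hU (diagU z hz) (fun v => mono s v * conj (mono t v))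
    ((continuous_mono s).mul (Complex.continuous_conj.comp (continuous_mono t)))
  simp only [hm, map_mul, map_pow] at key
  have e : ∀ x, w ^ (cnt s i : ℕ) * mono s (f x) * ((conj w) ^ (cnt t i : ℕ) * conj (mono t (f x)))
      = (w ^ (cnt s i : ℕ) * (conj w) ^ (cnt t i : ℕ)) * (mono s (f x) * conj (mono t (f x))) := by
    intro x; ring
  simp_rw [e] at key
  rw [MeasureTheory.integral_const_mul] at key
  by_contra hne
  have h1 : w ^ (cnt s i : ℕ) * (conj w) ^ (cnt t i : ℕ) = 1 := by
    exact mul_right_cancel₀ hne (by rw [key, one_mul])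
  have hwc : w * conj w = 1 := by
    rw [Complex.mul_conj, Complex.normSq_eq_norm_sq, hn]; simp
  have h2 : w ^ (cnt s i : ℕ) = w ^ (cnt t i : ℕ) := by
    calc w ^ (cnt s i : ℕ) = w ^ (cnt s i : ℕ) * (w * conj w) ^ (cnt t i : ℕ) := by
          rw [hwc]; simp
      _ = (w ^ (cnt s i : ℕ) * (conj w) ^ (cnt t i : ℕ)) * w ^ (cnt t i : ℕ) := by
          rw [mul_pow]; ring
      _ = _ := by rw [h1, one_mul]
  exact hi (Fin.ext (hp.pow_inj (cnt s i).2 (cnt t i).2 h2))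

/-- Second moment of a monomial. -/
noncomputable def mom (f : X → EuclideanSpace ℂ ι) {k : ℕ} (s : Fin k → ι) : ℝ :=
  ∫ x, ‖mono s (f x)‖ ^ 2 ∂μ

lemma mom_congr {k : ℕ} {s t : Fin k → ι} (h : cnt s = cnt t) : mom μ f s = mom μ f t := by
  unfold mom; simp_rw [mono_congr h]

lemma gram (hU : UInv μ f) {k : ℕ} (s t : Fin k → ι) :
    ∫ x, mono s (f x) * conj (mono t (f x)) ∂μ = if cnt s = cnt t then (mom μ f s : ℂ) else 0 := by
  split_ifs with h
  · unfold mom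
    rw [← integral_complex_ofReal]
    congr 1
    funext x
    rw [← mono_congr h, Complex.mul_conj, Complex.normSq_eq_norm_sq]
  · exact orth μ hU h

lemma expand (hf : Continuous f) (hU : UInv μ f) {k : ℕ} (v : (Fin k → ι) → ℂ) :
    ((∫ x, ‖∑ s, v s * mono s (f x)‖ ^ 2 ∂μ : ℝ) : ℂ) =
      ∑ s, ∑ t, if cnt s = cnt t then v s * conj (v t) * (mom μ f s : ℂ) else 0 := by
  rw [← integral_complex_ofReal]
  have h1 : ∀ x, ((‖∑ s, v s * mono s (f x)‖ ^ 2 : ℝ) : ℂ) =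
      ∑ s, ∑ t, (v s * conj (v t)) * (mono s (f x) * conj (mono t (f x))) := by
    intro x
    rw [← Complex.normSq_eq_norm_sq, ← Complex.mul_conj, map_sum, Finset.sum_mul_sum]
    refine Finset.sum_congr rfl fun s _ => Finset.sum_congr rfl fun t _ => ?_
    rw [map_mul]; ring
  simp_rw [h1]
  have hc : ∀ s t : Fin k → ι, MeasureTheory.Integrable
      (fun x => (v s * conj (v t)) * (mono s (f x) * conj (mono t (f x)))) μ := by
    intro s t
    apply integrable_cont
    exact continuous_const.mul (((continuous_mono s).comp hf).mul
      (Complex.continuous_conj.comp ((continuous_mono t).comp hf)))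
  rw [MeasureTheory.integral_finsetSum _ fun s _ => MeasureTheory.integrable_finsetSum _ fun t _ => hc s t]
  refine Finset.sum_congr rfl fun s _ => ?_
  rw [MeasureTheory.integral_finsetSum _ fun t _ => hc s t]
  refine Finset.sum_congr rfl fun t _ => ?_
  rw [MeasureTheory.integral_const_mul, gram μ hU]
  split_ifs <;> simp

/-- The moment constant: moments of overlap with a fixed unit vector. -/
lemma const_unit (hU : UInv μ f) (k : ℕ) (i₀ : ι) (φ : EuclideanSpace ℂ ι)
    (hφ : ‖φ‖ = 1) : ∫ x, ‖⟪φ, f x⟫_ℂ ^ k‖ ^ 2 ∂μ = ∫ x, ‖(f x i₀) ^ k‖ ^ 2 ∂μ := by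
  have ho : Orthonormal ℂ (({i₀} : Set ι).domRestrict (fun _ : ι => φ)) := by
    constructor
    · intro i; exact hφ
    · intro i j hij; exact absurd (Subsingleton.elim i j) hij
  obtain ⟨b, hb⟩ := ho.exists_orthonormalBasis_extension_of_card_eq (by simp)
  have hb0 : b i₀ = φ := hb i₀ rfl
  have key := hU b.repr (fun v => ((‖(v i₀) ^ k‖ ^ 2 : ℝ) : ℂ)) (by fun_prop)
  rw [integral_complex_ofReal, integral_complex_ofReal] at key
  have := Complex.ofReal_injective key
  rw [← this]
  simp_rw [b.repr_apply_apply, hb0]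

lemma poly_id (hf : Continuous f) (hU : UInv μ f) (k : ℕ) (i₀ : ι) (y : ι → ℝ) (hy : ∀ i, 0 < y i) :
    ∑ s : Fin k → ι, ((ncl s : ℝ) * mom μ f s - ∫ x, ‖(f x i₀) ^ k‖ ^ 2 ∂μ) * ∏ l, y (s l) ^ 2 = 0 := by
  set c := ∫ x, ‖(f x i₀) ^ k‖ ^ 2 ∂μ with hc
  let φ : EuclideanSpace ℂ ι := WithLp.toLp 2 (fun i => (y i : ℂ))
  have hφi : ∀ i, φ i = (y i : ℂ) := fun i => rfl
  have hφ0 : φ ≠ 0 := by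
    intro h
    have := hφi i₀
    rw [h] at this
    simp only [PiLp.zero_apply] at this
    exact (hy i₀).ne (by exact_mod_cast this)
  have hnorm : ‖φ‖ ^ 2 = ∑ i, y i ^ 2 := by
    rw [EuclideanSpace.norm_sq_eq]; simp [hφi]
  have hn0 : ‖φ‖ ≠ 0 := norm_ne_zero_iff.mpr hφ0
  have hu := const_unit μ hU k i₀ ((‖φ‖⁻¹ : ℂ) • φ) (by
    rw [norm_smul]; simp [hn0])
  have e1 : ∀ x, ‖⟪(‖φ‖⁻¹ : ℂ) • φ, f x⟫_ℂ ^ k‖ ^ 2 =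
      (‖φ‖ ^ (2 * k))⁻¹ * ‖∑ s : Fin k → ι, (∏ l, (y (s l) : ℂ)) * mono s (f x)‖ ^ 2 := by
    intro x
    rw [inner_smul_left]
    have : ∑ s : Fin k → ι, (∏ l, (y (s l) : ℂ)) * mono s (f x) = ⟪φ, f x⟫_ℂ ^ k := by
      have : ⟪φ, f x⟫_ℂ = ∑ i, (y i : ℂ) * f x i := by
        rw [PiLp.inner_apply]
        refine Finset.sum_congr rfl fun i _ => ?_
        rw [hφi]; simp [mul_comm]
      rw [this, Fintype.sum_pow]
      refine Finset.sum_congr rfl fun s _ => ?_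
      rw [mono, Finset.prod_mul_distrib]
    rw [this, mul_pow, norm_mul, mul_pow]
    congr 1
    simp
    ring
  simp_rw [e1] at hu
  rw [MeasureTheory.integral_const_mul, ← hc] at hu
  have h2 : ∫ x, ‖∑ s : Fin k → ι, (∏ l, (y (s l) : ℂ)) * mono s (f x)‖ ^ 2 ∂μ
      = c * ∑ s : Fin k → ι, ∏ l, y (s l) ^ 2 := by
    rw [← Fintype.sum_pow (fun i => y i ^ 2), ← hnorm, ← hu, ← pow_mul]
    field_simp
  have h3 := expand μ hf hU (fun s : Fin k → ι => ∏ l, (y (s l) : ℂ))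
  rw [h2] at h3
  have h4 : ∀ s : Fin k → ι, (∑ t : Fin k → ι, if cnt s = cnt t then
      (∏ l, (y (s l) : ℂ)) * conj (∏ l, (y (t l) : ℂ)) * (mom μ f s : ℂ) else 0) =
      (((ncl s : ℝ) * mom μ f s * ∏ l, y (s l) ^ 2 : ℝ) : ℂ) := by
    intro s
    have : ∀ t : Fin k → ι, (if cnt s = cnt t then
      (∏ l, (y (s l) : ℂ)) * conj (∏ l, (y (t l) : ℂ)) * (mom μ f s : ℂ) else 0) =
      if cnt t = cnt s then (mom μ f s * ∏ l, (y (s l) : ℂ) ^ 2) else 0 := by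
      intro t
      by_cases h : cnt s = cnt t
      · rw [if_pos h, if_pos h.symm, map_prod]
        simp only [Complex.conj_ofReal]
        rw [prod_eq_cnt (fun i => (y i : ℂ)) t, ← h, ← prod_eq_cnt (fun i => (y i : ℂ)) s,
          Finset.prod_pow]
        ring
      · rw [if_neg h, if_neg (fun h' => h h'.symm)]
    simp_rw [this]
    rw [← Finset.sum_filter, Finset.sum_const, nsmul_eq_mul]
    rw [ncl]
    push_cast
    ring
  simp_rw [h4] at h3
  have h5 : c * ∑ s : Fin k → ι, ∏ l, y (s l) ^ 2 =
    ∑ s : Fin k → ι, (ncl s : ℝ) * mom μ f s * ∏ l, y (s l) ^ 2 := by exact_mod_cast h3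
  simp_rw [sub_mul]
  rw [Finset.sum_sub_distrib, ← h5, Finset.mul_sum, sub_self]

lemma ncl_mul_mom (hf : Continuous f) (hU : UInv μ f) (k : ℕ) (i₀ : ι) (s₀ : Fin k → ι) :
    (ncl s₀ : ℝ) * mom μ f s₀ = ∫ x, ‖(f x i₀) ^ k‖ ^ 2 ∂μ := by
  set c := ∫ x, ‖(f x i₀) ^ k‖ ^ 2 ∂μ with hc
  let ex : (Fin k → ι) → (ι →₀ ℕ) := fun s => Finsupp.equivFunOnFinite.symm (fun i => (cnt s i : ℕ))
  have hex : ∀ s t, ex s = ex t ↔ cnt s = cnt t := by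
    intro s t
    simp only [ex, EmbeddingLike.apply_eq_iff_eq]
    constructor
    · intro h; funext i; exact Fin.ext (congrFun h i)
    · intro h; rw [h]
  let P : MvPolynomial ι ℝ := ∑ s : Fin k → ι, MvPolynomial.monomial (ex s) ((ncl s : ℝ) * mom μ f s - c)
  have hP : P = 0 := by
    refine MvPolynomial.funext_set (fun _ => Set.Ioi (0 : ℝ)) (fun _ => Set.Ioi_infinite 0) ?_
    intro y hy
    have hy' : ∀ i, 0 < y i := fun i => hy i (Set.mem_univ i)
    have := poly_id μ hf hU k i₀ (fun i => Real.sqrt (y i)) (fun i => Real.sqrt_pos.mpr (hy' i))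
    rw [map_zero, ← this]
    simp only [P, map_sum, MvPolynomial.eval_monomial]
    refine Finset.sum_congr rfl fun s _ => ?_
    congr 1
    simp only [fun i => Real.sq_sqrt (hy' i).le]
    rw [prod_eq_cnt y s, Finsupp.prod_fintype _ _ (by simp)]
    rfl
  have hco := congrArg (MvPolynomial.coeff (ex s₀)) hP
  simp only [P, MvPolynomial.coeff_sum, MvPolynomial.coeff_monomial, MvPolynomial.coeff_zero, hex] at hco
  rw [← Finset.sum_filter, Finset.sum_congr rfl (g := fun _ => (ncl s₀ : ℝ) * mom μ f s₀ - c),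
    Finset.sum_const, nsmul_eq_mul] at hco
  · have : ((Finset.univ.filter (fun t : Fin k → ι => cnt t = cnt s₀)).card : ℝ) ≠ 0 := by
      exact_mod_cast (ncl_pos s₀).ne'
    have := (mul_eq_zero.mp hco).resolve_left this
    linarith
  · intro s hs
    have := (Finset.mem_filter.mp hs).2
    rw [ncl_congr this, mom_congr μ this]

lemma const_le (hf : Continuous f) (hU : UInv μ f) (hf1 : ∀ x, ‖f x‖ = 1) (k : ℕ) (i₀ : ι) :
    ∫ x, ‖(f x i₀) ^ k‖ ^ 2 ∂μ ≤ (k.factorial : ℝ) / (Fintype.card ι : ℝ) ^ k := by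
  have hD : (0 : ℝ) < (Fintype.card ι : ℝ) := by
    exact_mod_cast Fintype.card_pos_iff.mpr ⟨i₀⟩
  have hsum : ∑ s : Fin k → ι, mom μ f s = 1 := by
    unfold mom
    rw [← MeasureTheory.integral_finsetSum]
    · have : ∀ x, ∑ s : Fin k → ι, ‖mono s (f x)‖ ^ 2 = 1 := by
        intro x
        have h := EuclideanSpace.norm_sq_eq (f x)
        rw [hf1] at h
        have h2 := Fintype.sum_pow (fun i => ‖f x i‖ ^ 2) k
        rw [← h] at h2
        simp only [one_pow] at h2
        rw [h2]
        refine Finset.sum_congr rfl fun s _ => ?_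
        rw [mono, norm_prod, Finset.prod_pow]
      simp_rw [this]
      simp
    · intro s _
      exact integrable_cont μ ((((continuous_mono s).comp hf).norm).pow 2)
  rw [le_div_iff₀ (by positivity)]
  set c := ∫ x, ‖(f x i₀) ^ k‖ ^ 2 ∂μ with hc
  have : ∑ _s : Fin k → ι, c ≤ ∑ s : Fin k → ι, (k.factorial : ℝ) * mom μ f s := by
    refine Finset.sum_le_sum fun s _ => ?_
    rw [hc, ← ncl_mul_mom μ hf hU k i₀ s]
    refine mul_le_mul_of_nonneg_right (by exact_mod_cast ncl_le s) ?_
    exact MeasureTheory.integral_nonneg fun x => by positivity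
  rw [← Finset.mul_sum, hsum, Finset.sum_const, nsmul_eq_mul] at this
  simpa [mul_comm] using this

/-- The second moment of a sum of distinct monomial words. -/
lemma moment_bound (hf : Continuous f) (hU : UInv μ f) (hf1 : ∀ x, ‖f x‖ = 1) {k : ℕ} (i₀ : ι)
    (T : Finset (Fin k → ι)) :
    ∫ x, ‖∑ s ∈ T, mono s (f x)‖ ^ 2 ∂μ ≤
      ((k.factorial : ℝ) / (Fintype.card ι : ℝ) ^ k) * T.card := by
  have h := expand μ hf hU (fun s => if s ∈ T then (1 : ℂ) else 0)
  have e : ∀ x, ∑ s, (if s ∈ T then (1 : ℂ) else 0) * mono s (f x) = ∑ s ∈ T, mono s (f x) := by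
    intro x; simp
  simp_rw [e] at h
  have h' : ∫ x, ‖∑ s ∈ T, mono s (f x)‖ ^ 2 ∂μ =
      ∑ s, ∑ t, if cnt s = cnt t then
        (if s ∈ T then (1 : ℝ) else 0) * (if t ∈ T then (1 : ℝ) else 0) * mom μ f s else 0 := by
    apply Complex.ofReal_injective
    rw [h]
    push_cast
    refine Finset.sum_congr rfl fun s _ => Finset.sum_congr rfl fun t _ => ?_
    split_ifs <;> simp
  rw [h']
  have hm : ∀ s : Fin k → ι, 0 ≤ mom μ f s := fun s =>
    MeasureTheory.integral_nonneg fun x => by positivity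
  calc _ ≤ ∑ s, if s ∈ T then (ncl s : ℝ) * mom μ f s else 0 := by
        refine Finset.sum_le_sum fun s _ => ?_
        by_cases hs : s ∈ T
        · simp only [hs, if_true, one_mul]
          rw [ncl, ← nsmul_eq_mul, ← Finset.sum_const, Finset.sum_filter]
          refine Finset.sum_le_sum fun t _ => ?_
          have := hm s
          by_cases hst : cnt s = cnt t
          · rw [if_pos hst, if_pos hst.symm]; split_ifs <;> simp [this]
          · rw [if_neg hst, if_neg (fun h => hst h.symm)]
        · simp [hs]
    _ = ∑ s ∈ T, (ncl s : ℝ) * mom μ f s := by simp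
    _ ≤ ∑ _s ∈ T, (k.factorial : ℝ) / (Fintype.card ι : ℝ) ^ k := by
        refine Finset.sum_le_sum fun s _ => ?_
        rw [ncl_mul_mom μ hf hU k i₀ s]
        exact const_le μ hf hU hf1 k i₀
    _ = _ := by rw [Finset.sum_const, nsmul_eq_mul, mul_comm]

end main

/-- Marginal types of a word over the product alphabet. -/
def marg {N : ℕ} {d : Fin N → ℕ} {k : ℕ} (s : Fin k → (∀ j, Fin (d j))) :
    ∀ j, Fin (d j) → Fin (k + 1) :=
  fun j => cnt (fun l => s l j)

/-- The words with the same marginal types as `s`. -/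
def mcl {N : ℕ} {d : Fin N → ℕ} {k : ℕ} (s : Fin k → (∀ j, Fin (d j))) :
    Finset (Fin k → (∀ j, Fin (d j))) :=
  Finset.univ.filter (fun t => marg t = marg s)

lemma mcl_pos {N : ℕ} {d : Fin N → ℕ} {k : ℕ} (s : Fin k → (∀ j, Fin (d j))) :
    (0 : ℝ) < ((mcl s).card : ℝ) := by
  exact_mod_cast Finset.card_pos.mpr ⟨s, by simp [mcl]⟩

/-- The dominating function. -/
noncomputable def domF {N : ℕ} {d : Fin N → ℕ} (k : ℕ) (v : EuclideanSpace ℂ (∀ j, Fin (d j))) : ℝ :=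
  ∑ s : Fin k → (∀ j, Fin (d j)), ‖(∑ t ∈ mcl s, mono t v) / ((mcl s).card : ℂ)‖ ^ 2

lemma sum_prodVec {N : ℕ} {d : Fin N → ℕ} (a : ∀ j, Fin (d j) → ℂ) (ha : ∀ j, IsUnitVec (a j)) :
    ∑ i, ‖prodVec a i‖ ^ 2 = 1 := by
  have h := Finset.prod_univ_sum (fun j => (Finset.univ : Finset (Fin (d j))))
    (fun j x => ‖a j x‖ ^ 2)
  rw [Finset.prod_congr rfl (fun j _ => ha j), Finset.prod_const_one, Fintype.piFinset_univ] at h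
  rw [h]
  refine Finset.sum_congr rfl fun i _ => ?_
  rw [prodVec, norm_prod, Finset.prod_pow]

lemma cs_complex {S : Type*} [Fintype S] (a b : S → ℂ) :
    ‖∑ s, a s * b s‖ ^ 2 ≤ (∑ s, ‖a s‖ ^ 2) * ∑ s, ‖b s‖ ^ 2 := by
  calc ‖∑ s, a s * b s‖ ^ 2 ≤ (∑ s, ‖a s‖ * ‖b s‖) ^ 2 := by
        gcongr
        refine (norm_sum_le _ _).trans (le_of_eq ?_)
        simp
    _ ≤ _ := Finset.sum_mul_sq_le_sq_mul_sq _ _ _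

lemma overlap_le_one {N : ℕ} {d : Fin N → ℕ} (a : ∀ j, Fin (d j) → ℂ) (ha : ∀ j, IsUnitVec (a j))
    (v : EuclideanSpace ℂ (∀ j, Fin (d j))) (hv : ‖v‖ = 1) :
    ‖∑ i, starRingEnd ℂ (prodVec a i) * v i‖ ^ 2 ≤ 1 := by
  refine (cs_complex _ _).trans (le_of_eq ?_)
  rw [← EuclideanSpace.norm_sq_eq v, hv]
  simp [sum_prodVec a ha]

lemma overlap_pow_le {N : ℕ} {d : Fin N → ℕ} (a : ∀ j, Fin (d j) → ℂ) (ha : ∀ j, IsUnitVec (a j))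
    (v : EuclideanSpace ℂ (∀ j, Fin (d j))) (k : ℕ) :
    (‖∑ i, starRingEnd ℂ (prodVec a i) * v i‖ ^ 2) ^ k ≤ domF k v := by
  have h1 : (∑ i, starRingEnd ℂ (prodVec a i) * v i) ^ k =
      ∑ s : Fin k → (∀ j, Fin (d j)), (∏ l, starRingEnd ℂ (prodVec a (s l))) * mono s v := by
    rw [Fintype.sum_pow]
    refine Finset.sum_congr rfl fun s _ => ?_
    rw [mono, Finset.prod_mul_distrib]
  have hβ : ∀ s t : Fin k → (∀ j, Fin (d j)), marg s = marg t →
      (∏ l, starRingEnd ℂ (prodVec a (s l))) = ∏ l, starRingEnd ℂ (prodVec a (t l)) := by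
    intro s t hst
    rw [← map_prod, ← map_prod]
    congr 1
    simp only [prodVec]
    rw [Finset.prod_comm, Finset.prod_comm (s := Finset.univ) (t := Finset.univ)
      (f := fun (l : Fin k) (j : Fin N) => a j (t l j))]
    refine Finset.prod_congr rfl fun j _ => ?_
    have hj := congrFun hst j
    simp only [marg] at hj
    rw [prod_eq_cnt (a j) (fun l => s l j), prod_eq_cnt (a j) (fun l => t l j), hj]
  rw [← pow_mul, mul_comm 2 k, pow_mul, ← norm_pow, h1, sum_average marg _ _ hβ]
  refine (cs_complex _ _).trans (le_of_eq ?_)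
  have h2 : ∑ s : Fin k → (∀ j, Fin (d j)), ‖∏ l, starRingEnd ℂ (prodVec a (s l))‖ ^ 2 = 1 := by
    have h := Fintype.sum_pow (fun i => ‖prodVec a i‖ ^ 2) k
    rw [sum_prodVec a ha, one_pow] at h
    rw [h]
    refine Finset.sum_congr rfl fun s _ => ?_
    rw [norm_prod, Finset.prod_pow]
    simp
  rw [h2, one_mul]
  rfl

lemma continuous_domF {N : ℕ} {d : Fin N → ℕ} (k : ℕ) :
    Continuous (domF k : EuclideanSpace ℂ (∀ j, Fin (d j)) → ℝ) := by
  unfold domF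
  refine continuous_finsetSum _ fun s _ => ?_
  exact (((continuous_finsetSum _ fun t _ => continuous_mono t).div_const _).norm).pow 2

lemma integral_domF_le {X : Type*} [TopologicalSpace X] [CompactSpace X] [MeasurableSpace X]
    [OpensMeasurableSpace X] (μ : MeasureTheory.Measure X) [MeasureTheory.IsProbabilityMeasure μ]
    {N : ℕ} {d : Fin N → ℕ} {f : X → EuclideanSpace ℂ (∀ j, Fin (d j))}
    (hf : Continuous f) (hU : UInv μ f) (hf1 : ∀ x, ‖f x‖ = 1) (k : ℕ) (i₀ : ∀ j, Fin (d j)) :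
    ∫ x, domF k (f x) ∂μ ≤
      ((k.factorial : ℝ) / (∏ j, (d j : ℝ)) ^ k) * ((k : ℝ) + 1) ^ (∑ j, d j) := by
  have hcard : ((Fintype.card (∀ j, Fin (d j)) : ℕ) : ℝ) = ∏ j, (d j : ℝ) := by simp
  have hcard2 : ((Fintype.card (∀ j, Fin (d j) → Fin (k + 1)) : ℕ) : ℝ) =
      ((k : ℝ) + 1) ^ (∑ j, d j) := by
    simp [Finset.prod_pow_eq_pow_sum]
  unfold domF
  rw [MeasureTheory.integral_finsetSum]
  · have hs := sum_inv_card_le (marg : (Fin k → (∀ j, Fin (d j))) → _)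
    rw [hcard2] at hs
    refine le_trans ?_ (mul_le_mul_of_nonneg_left hs ?_)
    · rw [Finset.mul_sum]
      refine Finset.sum_le_sum fun s _ => ?_
      have hp := mcl_pos s
      have e : ∀ x, ‖(∑ t ∈ mcl s, mono t (f x)) / ((mcl s).card : ℂ)‖ ^ 2 =
          (((mcl s).card : ℝ) ^ 2)⁻¹ * ‖∑ t ∈ mcl s, mono t (f x)‖ ^ 2 := by
        intro x
        rw [norm_div, div_pow, Complex.norm_natCast, div_eq_inv_mul]
      simp_rw [e]
      rw [MeasureTheory.integral_const_mul]
      have hb := moment_bound μ hf hU hf1 i₀ (mcl s)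
      rw [hcard] at hb
      calc _ ≤ (((mcl s).card : ℝ) ^ 2)⁻¹ *
            (((k.factorial : ℝ) / (∏ j, (d j : ℝ)) ^ k) * ((mcl s).card : ℝ)) :=
            mul_le_mul_of_nonneg_left hb (by positivity)
        _ = ((k.factorial : ℝ) / (∏ j, (d j : ℝ)) ^ k) * ((mcl s).card : ℝ)⁻¹ := by
            rw [mul_left_comm]
            congr 1
            field_simp
        _ = _ := rfl
    · positivity
  · intro s _
    apply integrable_cont
    exact ((((continuous_finsetSum _ fun t _ => (continuous_mono t).comp hf)).div_const _).norm).pow 2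

/-- Numerical estimate. -/
lemma numeric {D : ℝ} {S : ℕ} (hD : 8 ≤ D) (hS : 6 ≤ S)
    (hx : 9 * (S : ℝ) * Real.log D / 2 ≤ D) :
    ∃ k : ℕ, 0 < k ∧ ((k.factorial : ℝ) / D ^ k) * ((k : ℝ) + 1) ^ S <
      (D ^ S)⁻¹ * (9 * (S : ℝ) * Real.log D / (2 * D)) ^ k := by
  set x := 9 * (S : ℝ) * Real.log D / 2 with hxdef
  have hS' : (6 : ℝ) ≤ S := by exact_mod_cast hS
  have hL2 : (0.69 : ℝ) < Real.log 2 := by have := Real.log_two_gt_d9; linarith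
  have hL : 1 ≤ Real.log D := by
    have : Real.log 8 ≤ Real.log D := Real.log_le_log (by norm_num) hD
    have h8 : Real.log 8 = 3 * Real.log 2 := by
      rw [show (8 : ℝ) = 2 ^ 3 by norm_num, Real.log_pow]; norm_num
    linarith
  have hSL : 6 ≤ (S : ℝ) * Real.log D := by nlinarith
  have hx27 : 27 ≤ x := by rw [hxdef]; linarith
  have hfl := Nat.floor_le (show 0 ≤ x by linarith)
  have hfl2 := Nat.lt_floor_add_one x
  have hfl3 : 27 ≤ ⌊x⌋₊ := Nat.le_floor (by exact_mod_cast hx27)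
  obtain ⟨k, hk⟩ : ∃ k, ⌊x⌋₊ = k + 1 := ⟨⌊x⌋₊ - 1, by omega⟩
  rw [hk] at hfl hfl2 hfl3
  push_cast at hfl hfl2
  refine ⟨k, by omega, ?_⟩
  have hx0 : 0 < x := by linarith
  have hD0 : 0 < D := by linarith
  have e1 : 9 * (S : ℝ) * Real.log D / (2 * D) = x / D := by rw [hxdef]; field_simp
  rw [e1, div_pow]
  have hfac : (2 : ℝ) ^ k * (k.factorial : ℝ) ≤ ((k : ℝ) + 1) ^ k := by
    exact_mod_cast two_pow_mul_factorial_le k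
  have hfac2 : (2 : ℝ) ^ k * (k.factorial : ℝ) ≤ x ^ k :=
    hfac.trans (pow_le_pow_left₀ (by positivity) hfl k)
  have hpowS : ((k : ℝ) + 1) ^ S ≤ D ^ S := pow_le_pow_left₀ (by positivity) (hfl.trans hx) S
  have hbig : D ^ S * D ^ S < (2 : ℝ) ^ k := by
    rw [← Real.log_lt_log_iff (by positivity) (by positivity), Real.log_mul (by positivity) (by positivity),
      Real.log_pow, Real.log_pow]
    have : x - 2 < k := by linarith
    have h3 : (x - 2) * 0.69 < (k : ℝ) * Real.log 2 := by nlinarith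
    have : x = 4.5 * ((S : ℝ) * Real.log D) := by rw [hxdef]; ring
    nlinarith
  have hDS : 0 < D ^ S := by positivity
  have hxk : 0 < x ^ k := by positivity
  have key : (k.factorial : ℝ) * ((k : ℝ) + 1) ^ S < (D ^ S)⁻¹ * x ^ k := by
    rw [inv_mul_eq_div, lt_div_iff₀ hDS]
    have hfp : (0 : ℝ) < k.factorial := by exact_mod_cast Nat.factorial_pos k
    calc (k.factorial : ℝ) * ((k : ℝ) + 1) ^ S * D ^ S
        ≤ (k.factorial : ℝ) * D ^ S * D ^ S := by gcongr
      _ = (k.factorial : ℝ) * (D ^ S * D ^ S) := by ring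
      _ < (k.factorial : ℝ) * 2 ^ k := by gcongr
      _ ≤ x ^ k := by rw [mul_comm]; exact hfac2
  calc _ = ((k.factorial : ℝ) * ((k : ℝ) + 1) ^ S) / D ^ k := by ring
    _ < ((D ^ S)⁻¹ * x ^ k) / D ^ k := by gcongr
    _ = _ := by ring

end Aux

/-- **Almost all multipartite pure states are nearly maximally entangled with respect to
the geometric measure.** For N ≥ 3 parties with local dimensions d_j ≥ 2,
d_T = ∏_j d_j, d_S = Σ_j d_j, and μ the unitarily invariant Borel probability measure
on the unit sphere of ⊗_j ℂ^{d_j}, the fraction of unit vectors ψ with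
Λ²(|ψ⟩⟨ψ|) ≥ (9 d_S ln d_T)/(2 d_T) — equivalently, with
G(|ψ⟩⟨ψ|) ≤ log₂ d_T − log₂(d_S ln d_T) − log₂(9/2) — is less than d_T^{−d_S}. -/
theorem generic_states_nearly_maximally_entangled {N : ℕ} (hN : 3 ≤ N)
    (d : Fin N → ℕ) (hd : ∀ j, 2 ≤ d j)
    (μ : MeasureTheory.Measure
      (Metric.sphere (0 : EuclideanSpace ℂ (∀ j, Fin (d j))) 1))
    [MeasureTheory.IsProbabilityMeasure μ]
    (hinv : ∀ U : EuclideanSpace ℂ (∀ j, Fin (d j)) ≃ₗᵢ[ℂ] EuclideanSpace ℂ (∀ j, Fin (d j)),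
      μ.map (sphereMap U) = μ) :
    μ {ψ : Metric.sphere (0 : EuclideanSpace ℂ (∀ j, Fin (d j))) 1 |
        9 * (∑ j, (d j : ℝ)) * Real.log (∏ j, (d j : ℝ)) / (2 * ∏ j, (d j : ℝ))
          ≤ pureMaxOverlap (fun i => (ψ : EuclideanSpace ℂ (∀ j, Fin (d j))) i)}
      < ENNReal.ofReal (((∏ j, (d j : ℝ)) ^ (∑ j, d j))⁻¹) := by
  classical
  haveI : BorelSpace (EuclideanSpace ℂ (∀ j, Fin (d j))) := ⟨rfl⟩
  let f : Metric.sphere (0 : EuclideanSpace ℂ (∀ j, Fin (d j))) 1 →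
    EuclideanSpace ℂ (∀ j, Fin (d j)) := fun ψ => ψ
  have hf : Continuous f := continuous_subtype_val
  have hf1 : ∀ x, ‖f x‖ = 1 := fun x => mem_sphere_zero_iff_norm.mp x.2
  have hU : UInv μ f := by
    intro U g hg
    have hm : Continuous (sphereMap U) :=
      Continuous.subtype_mk (U.continuous.comp continuous_subtype_val) _
    have h := MeasureTheory.integral_map (μ := μ) (f := fun x => g (f x)) hm.measurable.aemeasurable
      (hg.comp hf).aestronglyMeasurable
    rw [hinv U] at h
    exact h.symm
  set D : ℝ := ∏ j, (d j : ℝ) with hDdef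
  have hcast : ∑ j, (d j : ℝ) = ((∑ j, d j : ℕ) : ℝ) := by push_cast; rfl
  rw [hcast]
  set S : ℕ := ∑ j, d j with hSdef
  have hD8 : 8 ≤ D := by
    calc (8 : ℝ) = 2 ^ 3 := by norm_num
      _ ≤ 2 ^ N := pow_le_pow_right₀ (by norm_num) hN
      _ = ∏ _j : Fin N, (2 : ℝ) := by simp
      _ ≤ D := Finset.prod_le_prod (fun _ _ => by norm_num) (fun j _ => by exact_mod_cast hd j)
  have hS6 : 6 ≤ S := by
    calc 6 ≤ N * 2 := by omega
      _ = ∑ _j : Fin N, 2 := by simp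
      _ ≤ S := Finset.sum_le_sum (fun j _ => hd j)
  have hD0 : 0 < D := by linarith
  set T : ℝ := 9 * (S : ℝ) * Real.log D / (2 * D) with hT
  have hTx : T * D = 9 * (S : ℝ) * Real.log D / 2 := by rw [hT]; field_simp
  have hRpos : 0 < (D ^ S)⁻¹ := by positivity
  have hLpos : 0 < Real.log D := Real.log_pos (by linarith)
  have hSpos : (0 : ℝ) < S := by exact_mod_cast (by omega : 0 < S)
  have hT0 : 0 < T := by rw [hT]; positivity
  by_cases hT1 : T ≤ 1
  · obtain ⟨k, hk0, hk⟩ := numeric hD8 hS6 (by rw [← hTx]; nlinarith)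
    rw [← hT] at hk
    have hint := integral_domF_le μ hf hU hf1 k (fun j => ⟨0, by have := hd j; omega⟩)
    have hnn : ∀ v : EuclideanSpace ℂ (∀ j, Fin (d j)), 0 ≤ domF k v := fun v =>
      Finset.sum_nonneg fun s _ => by positivity
    have hsub : {ψ : Metric.sphere (0 : EuclideanSpace ℂ (∀ j, Fin (d j))) 1 |
        T ≤ pureMaxOverlap (fun i => (ψ : EuclideanSpace ℂ (∀ j, Fin (d j))) i)} ⊆
        {ψ | T ^ k ≤ domF k (f ψ)} := by
      intro ψ hψ
      simp only [Set.mem_setOf_eq] at hψ ⊢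
      by_contra! hlt
      have hle : pureMaxOverlap (fun i => (ψ : EuclideanSpace ℂ (∀ j, Fin (d j))) i) ≤
          (domF k (f ψ)) ^ ((k : ℝ)⁻¹) := by
        refine Real.sSup_le ?_ (Real.rpow_nonneg (hnn _) _)
        rintro r ⟨a, ha, rfl⟩
        have h := Real.rpow_le_rpow (by positivity) (overlap_pow_le a ha (f ψ) k)
          (show (0 : ℝ) ≤ (k : ℝ)⁻¹ by positivity)
        rw [Real.pow_rpow_inv_natCast (by positivity) hk0.ne'] at h
        exact h
      have hlt2 : (domF k (f ψ)) ^ ((k : ℝ)⁻¹) < T := by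
        calc (domF k (f ψ)) ^ ((k : ℝ)⁻¹) < (T ^ k) ^ ((k : ℝ)⁻¹) :=
              Real.rpow_lt_rpow (hnn _) hlt (by positivity)
          _ = T := Real.pow_rpow_inv_natCast hT0.le hk0.ne'
      linarith
    have hmark := MeasureTheory.mul_meas_ge_le_integral_of_nonneg (μ := μ)
      (f := fun x => domF k (f x)) (Filter.Eventually.of_forall fun x => hnn _)
      (integrable_cont μ ((continuous_domF k).comp hf)) (T ^ k)
    have hreal : μ.real {ψ | T ^ k ≤ domF k (f ψ)} < (D ^ S)⁻¹ := by
      have hTk : 0 < T ^ k := by positivity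
      have : T ^ k * μ.real {ψ | T ^ k ≤ domF k (f ψ)} < T ^ k * (D ^ S)⁻¹ := by
        rw [mul_comm (T ^ k) (D ^ S)⁻¹]
        exact lt_of_le_of_lt (hmark.trans hint) hk
      exact lt_of_mul_lt_mul_left this hTk.le
    refine lt_of_le_of_lt (MeasureTheory.measure_mono hsub) ?_
    rw [← MeasureTheory.ofReal_measureReal]
    exact (ENNReal.ofReal_lt_ofReal_iff hRpos).mpr hreal
  · have hempty : {ψ : Metric.sphere (0 : EuclideanSpace ℂ (∀ j, Fin (d j))) 1 |
        T ≤ pureMaxOverlap (fun i => (ψ : EuclideanSpace ℂ (∀ j, Fin (d j))) i)} = ∅ := by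
      rw [Set.eq_empty_iff_forall_notMem]
      intro ψ hψ
      simp only [Set.mem_setOf_eq] at hψ
      have : pureMaxOverlap (fun i => (ψ : EuclideanSpace ℂ (∀ j, Fin (d j))) i) ≤ 1 := by
        refine Real.sSup_le ?_ zero_le_one
        rintro r ⟨a, ha, rfl⟩
        exact overlap_le_one a ha _ (hf1 ψ)
      linarith
    rw [hempty, MeasureTheory.measure_empty]
    exact ENNReal.ofReal_pos.mpr hRpos

end Paper
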